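/- Let λ be a partition with degree vector n_1 > n_2 > … > n_ℓ, let p be the number of odd entries and q the number of even entries of the degree vector, and set k = p − q if p ≥ q and k = q − p − 1 otherwise, and m = k(k+1)/2. Then there exists a monic polynomial R ∈ ℚ[X] with R(0) ≠ 0 such that He_λ(X) = X^m · R(X²) and m + 2·deg(R) = |λ|. (In particular the multiplicity of 0 as a root of He_λ equals the triangular number k(k+1)/2, the size of the 2-core of λ.) -/

import Mathlib

/-- A partition: a weakly decreasing list of positive integers. -/
def IsPartition (l : List ℕ) : Prop :=
  l.Pairwise (· ≥ ·) ∧ ∀ x ∈ l, 0 < x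

/-- The degree vector of a partition: `n_i = λ_i + ℓ(λ) − i` (here `i` is 0-indexed). -/
def degVec (l : List ℕ) (i : Fin l.length) : ℕ :=
  l.get i + (l.length - 1 - (i : ℕ))

/-- The Vandermonde determinant `Δ(n_λ) = ∏_{i<j} (n_j − n_i)` of the degree vector. -/
noncomputable def vanderQ (l : List ℕ) : ℚ :=
  ∏ i : Fin l.length, ∏ j : Fin l.length,
    if (i : ℕ) < (j : ℕ) then ((degVec l j : ℚ) - (degVec l i : ℚ)) else 1

/-- The Wronskian Hermite polynomial
`He_λ = Wr[He_{n_1},…,He_{n_ℓ}] / Δ(n_λ)`. -/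
noncomputable def HeW (l : List ℕ) : Polynomial ℚ :=
  Polynomial.C (vanderQ l)⁻¹ *
    (Matrix.of fun i j : Fin l.length =>
      (⇑Polynomial.derivative)^[(i : ℕ)]
        ((Polynomial.hermite (degVec l j)).map (Int.castRingHom ℚ))).det

/-- The number of odd entries of the degree vector. -/
def oddCount (l : List ℕ) : ℕ :=
  (Finset.univ.filter fun i : Fin l.length => Odd (degVec l i)).card

/-- The number of even entries of the degree vector. -/
def evenCount (l : List ℕ) : ℕ :=
  (Finset.univ.filter fun i : Fin l.length => Even (degVec l i)).card

/-- `k = p − q` if `p ≥ q`, and `k = q − p − 1` otherwise. -/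
def coreK (l : List ℕ) : ℕ :=
  if evenCount l ≤ oddCount l then oddCount l - evenCount l
  else evenCount l - oddCount l - 1

open Polynomial in
theorem exists_poly_coeff (f : ℕ → ℚ) (N : ℕ) (h : ∀ k, N ≤ k → f k = 0) :
    ∃ P : ℚ[X], ∀ k, P.coeff k = f k := by
  refine ⟨∑ k ∈ Finset.range N, monomial k (f k), fun k => ?_⟩
  simp only [finsetSum_coeff, coeff_monomial, Finset.sum_ite_eq', Finset.mem_range]
  split_ifs with hk
  · rfl
  · exact (h k (not_lt.mp hk)).symm

open Polynomial in
theorem coeff_X_pow_mul_iter (g : ℚ[X]) (i n : ℕ) :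
    (X ^ i * (⇑derivative)^[i] g).coeff n = (n.descFactorial i : ℚ) * g.coeff n := by
  rw [coeff_X_pow_mul']
  split_ifs with h
  · rw [coeff_iterate_derivative, Nat.sub_add_cancel h, nsmul_eq_mul]
  · rw [Nat.descFactorial_of_lt (not_le.mp h)]; simp

open Polynomial in
theorem iter_expand (e i : ℕ) (G : ℚ[X]) :
    ∃ S : ℚ[X], S.coeff 0 = (e.descFactorial i : ℚ) * G.coeff 0 ∧
      X ^ i * (⇑derivative)^[i] (X ^ e * expand ℚ 2 G) = X ^ e * expand ℚ 2 S := by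
  obtain ⟨S, hS⟩ := exists_poly_coeff
    (fun k => ((e + 2 * k).descFactorial i : ℚ) * G.coeff k) (G.natDegree + 1) (by
      intro k hk
      rw [coeff_eq_zero_of_natDegree_lt (by omega), mul_zero])
  refine ⟨S, by simp [hS], ?_⟩
  ext n
  rw [coeff_X_pow_mul_iter, coeff_X_pow_mul', coeff_X_pow_mul', coeff_expand two_pos,
    coeff_expand two_pos]
  split_ifs with h1 h2
  · obtain ⟨c, hc⟩ := h2
    rw [hS]
    have : e + 2 * ((n - e) / 2) = n := by omega
    rw [this]
  · simp
  · simp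

open Polynomial in
theorem det_iter_mul {ι : Type*} [Fintype ι] [DecidableEq ι] (r : ι → ℕ) (g : ι → ℚ[X]) :
    X ^ (∑ i, r i) * (Matrix.of fun i k : ι => (⇑derivative)^[r i] (g k)).det
      = (Matrix.of fun i k : ι => X ^ (r i) * (⇑derivative)^[r i] (g k)).det := by
  rw [← Finset.prod_pow_eq_pow_sum, ← Matrix.det_mul_column]
  rfl

open Polynomial in
theorem low_order {ι : Type*} [Fintype ι] [DecidableEq ι] (r e : ι → ℕ) (G : ι → ℚ[X])
    (hG : ∀ k, (G k).coeff 0 = 1) :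
    ∃ R : ℚ[X], R.eval 0 = (Matrix.of fun i k : ι => ((e k).descFactorial (r i) : ℚ)).det ∧
      X ^ (∑ i, r i) * (Matrix.of fun i k : ι =>
        (⇑derivative)^[r i] (X ^ (e k) * expand ℚ 2 (G k))).det
      = X ^ (∑ k, e k) * expand ℚ 2 R := by
  choose S hS0 hS using fun i k => iter_expand (e k) (r i) (G k)
  refine ⟨(Matrix.of fun i k => S i k).det, ?_, ?_⟩
  · have := RingHom.map_det (evalRingHom (0 : ℚ)) (Matrix.of fun i k => S i k)
    rw [coe_evalRingHom] at this
    rw [this]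
    congr 1
    ext i k
    simp [← coeff_zero_eq_eval_zero, hS0, hG]
  · rw [det_iter_mul]
    simp_rw [hS]
    have h2 := Matrix.det_mul_row (fun k => (X : ℚ[X]) ^ (e k))
      (Matrix.of fun i k => expand ℚ 2 (S i k))
    simp only [Matrix.of_apply] at h2
    rw [h2, Finset.prod_pow_eq_pow_sum]
    congr 1
    have := AlgHom.map_det (expand ℚ 2) (Matrix.of fun i k => S i k)
    rw [this]
    rfl

open Polynomial in
theorem det_desc_fin {n : ℕ} (v : Fin n → ℕ) :
    (Matrix.of fun i k : Fin n => ((v k).descFactorial i : ℚ)).det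
      = (Matrix.vandermonde fun i => (v i : ℚ)).det := by
  rw [Matrix.det_eval_matrixOfPolynomials_eq_det_vandermonde (fun i => (v i : ℚ))
      (fun i => descPochhammer ℚ i)
      (fun i => descPochhammer_natDegree ℚ i)
      (fun i => monic_descPochhammer ℚ i), ← Matrix.det_transpose]
  congr 1
  ext i k
  simp [descPochhammer_eval_eq_descFactorial]

theorem det_desc_ne_zero {n : ℕ} (v : Fin n → ℕ) (hv : Function.Injective v) :
    (Matrix.of fun i k : Fin n => ((v k).descFactorial i : ℚ)).det ≠ 0 := by
  rw [det_desc_fin, Matrix.det_vandermonde_ne_zero_iff]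
  exact Nat.cast_injective.comp hv

theorem det_desc_ne_zero' {ι : Type*} [Fintype ι] [DecidableEq ι] {n : ℕ} (σ : Fin n ≃ ι)
    (v : ι → ℕ) (hv : Function.Injective v) :
    (Matrix.of fun i k : ι => ((v k).descFactorial (σ.symm i) : ℚ)).det ≠ 0 := by
  rw [← Matrix.det_submatrix_equiv_self σ]
  convert det_desc_ne_zero (v ∘ σ) (hv.comp σ.injective) using 2
  ext i k
  simp

noncomputable def heQ (n : ℕ) : Polynomial ℚ :=
  (Polynomial.hermite n).map (Int.castRingHom ℚ)

theorem heQ_coeff_add (m k : ℕ) :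
    (heQ (2 * m + k)).coeff k =
      (-1/2 : ℚ) ^ m * (2 * m + k).factorial / (m.factorial * k.factorial) := by
  rw [heQ, Polynomial.coeff_map, Polynomial.coeff_hermite_explicit]
  have h1 : ((2 * m).factorial : ℚ) = (2 * m - 1).doubleFactorial * (2 ^ m * m.factorial) := by
    rcases m with _ | m
    · simp
    · have := Nat.factorial_eq_mul_doubleFactorial (2 * m + 1)
      have h2 := Nat.doubleFactorial_two_mul (m + 1)
      have h3 : 2 * (m + 1) = 2 * m + 1 + 1 := by ring
      rw [h3] at h2 ⊢
      rw [this, h2]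
      simp only [Nat.add_sub_cancel]
      push_cast; ring
  have h4 : ((2 * m + k).choose k : ℚ) = (2 * m + k).factorial / (k.factorial * (2 * m).factorial) := by
    rw [Nat.cast_choose ℚ (by omega : k ≤ 2 * m + k)]
    simp
  have h5 : (m.factorial : ℚ) ≠ 0 := by positivity
  have h6 : (k.factorial : ℚ) ≠ 0 := by positivity
  have h7 : ((2 * m).factorial : ℚ) ≠ 0 := by positivity
  simp only [map_mul, map_pow, map_neg, map_one, map_natCast, h4]
  rw [h1] at h7 ⊢
  rw [div_pow]
  have h8 : ((2 * m - 1).doubleFactorial : ℚ) ≠ 0 := left_ne_zero_of_mul h7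
  field_simp

theorem heQ_coeff (a κ δ : ℕ) :
    (heQ (2 * a + δ)).coeff (2 * κ + δ) =
      ((-1/2 : ℚ) ^ a * (2 * a + δ).factorial / a.factorial) *
      ((-2 : ℚ) ^ κ / (2 * κ + δ).factorial) * (a.descFactorial κ : ℚ) := by
  rcases le_or_gt κ a with h | h
  · obtain ⟨m, rfl⟩ := Nat.exists_eq_add_of_le' h
    have := heQ_coeff_add m (2 * κ + δ)
    have e : 2 * m + (2 * κ + δ) = 2 * (m + κ) + δ := by ring
    rw [e] at this
    rw [this]
    have h1 := Nat.factorial_mul_descFactorial h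
    rw [Nat.add_sub_cancel] at h1
    rw [← h1]
    have h5 : (m.factorial : ℚ) ≠ 0 := by positivity
    have h6 : ((2 * κ + δ).factorial : ℚ) ≠ 0 := by positivity
    have h7 : ((m + κ).descFactorial κ : ℚ) ≠ 0 := by
      have := Nat.factorial_pos (m + κ)
      rw [← h1] at this
      exact_mod_cast (Nat.pos_of_mul_pos_left this).ne'
    have h8 : (-1/2 : ℚ) ^ κ * (-2) ^ κ = 1 := by rw [← mul_pow]; norm_num
    push_cast
    rw [pow_add]
    field_simp
    linear_combination -h8
  · rw [Nat.descFactorial_of_lt h, heQ, Polynomial.coeff_map,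
      Polynomial.coeff_hermite_of_lt (by omega)]
    simp

theorem heQ_coeff_parity {n k : ℕ} (h : Odd (n + k)) : (heQ n).coeff k = 0 := by
  rw [heQ, Polynomial.coeff_map, Polynomial.coeff_hermite_of_odd_add h]
  simp

theorem heQ_coeff_lt {n k : ℕ} (h : n < k) : (heQ n).coeff k = 0 := by
  rw [heQ, Polynomial.coeff_map, Polynomial.coeff_hermite_of_lt h]
  simp

open Polynomial in
theorem heQ_expand (a δ : ℕ) (hδ : δ < 2) :
    ∃ F : ℚ[X], heQ (2 * a + δ) = X ^ δ * expand ℚ 2 F ∧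
      ∀ k, F.coeff k = (heQ (2 * a + δ)).coeff (2 * k + δ) := by
  obtain ⟨F, hF⟩ := exists_poly_coeff
    (fun k => (heQ (2 * a + δ)).coeff (2 * k + δ)) (a + 1) (by
      intro k hk
      exact heQ_coeff_lt (by omega))
  refine ⟨F, ?_, hF⟩
  ext n
  rw [coeff_X_pow_mul', coeff_expand two_pos]
  split_ifs with h1 h2
  · obtain ⟨c, hc⟩ := h2
    rw [hF]
    congr 1
    omega
  · exact heQ_coeff_parity (by rw [Nat.odd_iff]; omega)
  · exact heQ_coeff_parity (by rw [Nat.odd_iff]; omega)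

open Polynomial in
theorem basis_change {q : ℕ} (F : Fin q → ℚ[X])
    (hA : (Matrix.of fun i k : Fin q => (F i).coeff k).det ≠ 0) :
    ∃ G : Fin q → ℚ[X], (∀ k, (G k).coeff 0 = 1) ∧
      ∀ i, F i = ∑ k : Fin q, C ((F i).coeff k) * (X ^ (k : ℕ) * G k) := by
  set A := Matrix.of fun i k : Fin q => (F i).coeff k with hAdef
  have hu : IsUnit A.det := isUnit_iff_ne_zero.mpr hA
  have hBA := Matrix.nonsing_inv_mul A hu
  have hAB := Matrix.mul_nonsing_inv A hu
  set P : Fin q → ℚ[X] := fun k => ∑ i, C (A⁻¹ k i) * F i with hP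
  have hc : ∀ k j : Fin q, (P k).coeff j = if k = j then 1 else 0 := by
    intro k j
    have := congrFun (congrFun hBA k) j
    rw [Matrix.mul_apply, Matrix.one_apply] at this
    rw [← this]
    simp [hP, hAdef]
  have hd : ∀ k : Fin q, X ^ (k : ℕ) ∣ P k := by
    intro k
    rw [X_pow_dvd_iff]
    intro d hd
    have := hc k ⟨d, hd.trans k.2⟩
    simp only at this
    rw [this, if_neg]
    intro h
    have := congrArg Fin.val h
    simp at this
    omega
  choose G hG using hd
  refine ⟨G, ?_, ?_⟩
  · intro k
    have := hc k k
    rw [hG, coeff_X_pow_mul', if_pos le_rfl, Nat.sub_self, if_pos rfl] at this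
    exact this
  · intro i
    simp_rw [← hG, hP, Finset.mul_sum]
    rw [Finset.sum_comm]
    have : ∀ j, ∑ k : Fin q, C ((F i).coeff k) * (C (A⁻¹ k j) * F j) = C ((1 : Matrix (Fin q) (Fin q) ℚ) i j) * F j := by
      intro j
      rw [← hAB, Matrix.mul_apply, map_sum, Finset.sum_mul]
      refine Finset.sum_congr rfl fun k _ => ?_
      rw [← mul_assoc, ← C_mul]
      rfl
    simp_rw [this, Matrix.one_apply]
    simp

open Polynomial in
theorem he_basis {q : ℕ} (a : Fin q → ℕ) (ha : Function.Injective a) (δ : ℕ) (hδ : δ < 2) :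
    ∃ A : Matrix (Fin q) (Fin q) ℚ, A.det ≠ 0 ∧ ∃ G : Fin q → ℚ[X], (∀ k, (G k).coeff 0 = 1) ∧
      ∀ i, heQ (2 * a i + δ) = ∑ k, C (A i k) * (X ^ (2 * (k : ℕ) + δ) * expand ℚ 2 (G k)) := by
  choose F hF hFc using fun i => heQ_expand (a i) δ hδ
  have hdet : (Matrix.of fun i k : Fin q => (F i).coeff k).det ≠ 0 := by
    have h1 : (Matrix.of fun i k : Fin q => (F i).coeff k) =
        Matrix.of fun i k : Fin q => ((-1/2 : ℚ) ^ (a i) * (2 * a i + δ).factorial / (a i).factorial) *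
          (Matrix.of fun i k : Fin q => ((-2 : ℚ) ^ (k : ℕ) / (2 * (k : ℕ) + δ).factorial) *
            (Matrix.of fun i k : Fin q => ((a k).descFactorial i : ℚ)).transpose i k) i k := by
      ext i k
      simp only [Matrix.of_apply, Matrix.transpose_apply]
      rw [hFc, heQ_coeff]
      ring
    rw [h1, Matrix.det_mul_column, Matrix.det_mul_row, Matrix.det_transpose]
    refine mul_ne_zero ?_ (mul_ne_zero ?_ (det_desc_ne_zero a ha))
    · refine Finset.prod_ne_zero_iff.mpr fun i _ => ?_
      have := Nat.factorial_pos (2 * a i + δ)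
      have := Nat.factorial_pos (a i)
      refine div_ne_zero (mul_ne_zero (pow_ne_zero _ (by norm_num)) ?_) ?_ <;> positivity
    · refine Finset.prod_ne_zero_iff.mpr fun i _ => ?_
      refine div_ne_zero (pow_ne_zero _ (by norm_num)) ?_
      positivity
  obtain ⟨G, hG0, hG⟩ := basis_change F hdet
  refine ⟨_, hdet, G, hG0, fun i => ?_⟩
  rw [hF i]
  conv_lhs => rw [hG i]
  rw [map_sum, Finset.mul_sum]
  refine Finset.sum_congr rfl fun k _ => ?_
  simp only [map_mul, map_pow, expand_C, expand_X, Matrix.of_apply]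
  ring

open Polynomial in
theorem wr_low {p q n : ℕ} (σ : Fin n ≃ Fin q ⊕ Fin p) (a : Fin q → ℕ) (b : Fin p → ℕ)
    (ha : Function.Injective a) (hb : Function.Injective b) :
    ∃ R : ℚ[X], R.eval 0 ≠ 0 ∧
      X ^ (∑ i : Fin n, (i : ℕ)) * (Matrix.of fun i j : Fin n =>
        (⇑derivative)^[(i : ℕ)] (heQ (Sum.elim (fun i => 2 * a i + 0) (fun i => 2 * b i + 1) (σ j)))).det
      = X ^ (∑ i : Fin q, (2 * (i : ℕ) + 0) + ∑ i : Fin p, (2 * (i : ℕ) + 1)) * expand ℚ 2 R := by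
  obtain ⟨A, hA, G, hG, hAG⟩ := he_basis a ha 0 (by norm_num)
  obtain ⟨B, hB, H, hH, hBH⟩ := he_basis b hb 1 (by norm_num)
  set e : Fin q ⊕ Fin p → ℕ := Sum.elim (fun k => 2 * (k : ℕ) + 0) (fun k => 2 * (k : ℕ) + 1) with he
  set g : Fin q ⊕ Fin p → ℚ[X] := Sum.elim G H with hg
  set r : Fin q ⊕ Fin p → ℕ := fun i => (σ.symm i : ℕ) with hr
  set N : Matrix (Fin q ⊕ Fin p) (Fin q ⊕ Fin p) ℚ[X] := Matrix.of fun i k =>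
        (⇑derivative)^[r i] (X ^ (e k) * expand ℚ 2 (g k)) with hN
  set D : Matrix (Fin q ⊕ Fin p) (Fin q ⊕ Fin p) ℚ := Matrix.fromBlocks A 0 0 B with hD
  have hDdet : D.det ≠ 0 := by
    rw [hD, Matrix.det_fromBlocks_zero₂₁]
    exact mul_ne_zero hA hB
  obtain ⟨R, hR0, hR⟩ := low_order r e g (by rintro (k | k) <;> simp [hg, hG, hH])
  have hexp : ∀ j, heQ (Sum.elim (fun i => 2 * a i + 0) (fun i => 2 * b i + 1) j) =
      ∑ k, C (D j k) * (X ^ (e k) * expand ℚ 2 (g k)) := by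
    rintro (j | j)
    · simp only [Sum.elim_inl]
      rw [hAG]
      simp [Fintype.sum_sum_type, hD, he, hg]
    · simp only [Sum.elim_inr]
      rw [hBH]
      simp [Fintype.sum_sum_type, hD, he, hg]
  have hmat : (Matrix.of fun i j : Fin n =>
        (⇑derivative)^[(i : ℕ)] (heQ (Sum.elim (fun i => 2 * a i + 0) (fun i => 2 * b i + 1) (σ j))))
      = (N * (D.map C).transpose).submatrix σ σ := by
    refine Matrix.ext fun i j => ?_
    simp only [Matrix.of_apply, Matrix.submatrix_apply, Matrix.mul_apply, Matrix.transpose_apply,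
      Matrix.map_apply, hN, hr, Equiv.symm_apply_apply]
    rw [hexp, iterate_derivative_sum]
    refine Finset.sum_congr rfl fun k _ => ?_
    rw [iterate_derivative_C_mul, mul_comm]
  have hsum : ∑ i : Fin n, (i : ℕ) = ∑ i, r i :=
    Fintype.sum_equiv σ _ _ (by simp [hr])
  have hC : (D.map C).det = C D.det := (RingHom.map_det C D).symm
  refine ⟨C D.det * R, ?_, ?_⟩
  · rw [eval_mul, eval_C, hR0]
    refine mul_ne_zero hDdet (det_desc_ne_zero' σ e ?_)
    rintro (i | i) (j | j) h <;> simp only [he, Sum.elim_inl, Sum.elim_inr] at h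
    · congr 1; ext; omega
    · omega
    · omega
    · congr 1; ext; omega
  · rw [hmat, Matrix.det_submatrix_equiv_self, Matrix.det_mul, Matrix.det_transpose, hC, hsum,
      ← mul_assoc, hR, Fintype.sum_sum_type, map_mul, expand_C]
    simp only [he, Sum.elim_inl, Sum.elim_inr]
    ring

open Polynomial in
theorem prod_top {ι : Type*} (s : Finset ι) (f : ι → ℚ[X]) (n : ι → ℕ)
    (h : ∀ i ∈ s, (f i).natDegree ≤ n i) :
    (∏ i ∈ s, f i).natDegree ≤ ∑ i ∈ s, n i ∧
      (∏ i ∈ s, f i).coeff (∑ i ∈ s, n i) = ∏ i ∈ s, (f i).coeff (n i) := by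
  classical
  induction s using Finset.induction_on with
  | empty => simp
  | insert i s hi ih =>
    obtain ⟨h1, h2⟩ := ih fun j hj => h j (Finset.mem_insert_of_mem hj)
    have h3 := h i (Finset.mem_insert_self i s)
    rw [Finset.prod_insert hi, Finset.sum_insert hi, Finset.prod_insert hi]
    exact ⟨natDegree_mul_le_of_le h3 h1, by rw [coeff_mul_add_eq_of_natDegree_le h3 h1, h2]⟩

open Polynomial in
theorem det_top {n : ℕ} (M : Matrix (Fin n) (Fin n) ℚ[X]) (d : Fin n → ℕ)
    (h : ∀ i j, (M i j).natDegree ≤ d j) :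
    M.det.natDegree ≤ ∑ j, d j ∧
      M.det.coeff (∑ j, d j) = (Matrix.of fun i j => (M i j).coeff (d j)).det := by
  have key := fun σ : Equiv.Perm (Fin n) =>
    prod_top Finset.univ (fun i => M (σ i) i) d (fun i _ => h _ _)
  constructor
  · rw [Matrix.det_apply]
    refine natDegree_sum_le_of_forall_le _ _ fun σ _ => ?_
    exact (natDegree_smul_le _ _).trans (key σ).1
  · rw [Matrix.det_apply, Matrix.det_apply, finsetSum_coeff]
    refine Finset.sum_congr rfl fun σ _ => ?_
    rw [coeff_smul, (key σ).2]
    rfl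

open Polynomial in
theorem wr_top {n : ℕ} (d : Fin n → ℕ) :
    (X ^ (∑ i : Fin n, (i : ℕ)) * (Matrix.of fun i j : Fin n =>
        (⇑derivative)^[(i : ℕ)] (heQ (d j))).det).natDegree ≤ ∑ j, d j ∧
    (X ^ (∑ i : Fin n, (i : ℕ)) * (Matrix.of fun i j : Fin n =>
        (⇑derivative)^[(i : ℕ)] (heQ (d j))).det).coeff (∑ j, d j) =
      (Matrix.vandermonde fun i => (d i : ℚ)).det := by
  rw [det_iter_mul (fun i : Fin n => (i : ℕ)) (fun j => heQ (d j))]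
  have := det_top (Matrix.of fun i j : Fin n => X ^ (i : ℕ) * (⇑derivative)^[(i : ℕ)] (heQ (d j)))
    d (by
      intro i j
      rw [natDegree_le_iff_coeff_eq_zero]
      intro N hN
      rw [Matrix.of_apply, coeff_X_pow_mul_iter, heQ_coeff_lt hN, mul_zero])
  refine ⟨this.1, this.2.trans ?_⟩
  rw [← det_desc_fin]
  congr 1
  refine Matrix.ext fun i j => ?_
  simp only [Matrix.of_apply]
  rw [coeff_X_pow_mul_iter]
  have : (heQ (d j)).coeff (d j) = 1 := by simp [heQ]
  rw [this, mul_one]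

theorem degVec_injective (l : List ℕ) (hl : IsPartition l) : Function.Injective (degVec l) := by
  have key : ∀ i j : Fin l.length, i < j → degVec l j < degVec l i := by
    intro i j hij
    have h1 := List.pairwise_iff_get.mp hl.1 i j hij
    have h2 : (i : ℕ) < j := hij
    have h3 := j.2
    simp only [degVec]
    omega
  intro i j h
  rcases lt_trichotomy i j with h1 | h1 | h1
  · have := key i j h1; omega
  · exact h1
  · have := key j i h1; omega

theorem sum_degVec (l : List ℕ) :
    ∑ j, degVec l j = l.sum + ∑ i : Fin l.length, (i : ℕ) := by
  simp only [degVec, Finset.sum_add_distrib]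
  congr 1
  · rw [← List.sum_ofFn, List.ofFn_get]
  · refine Fintype.sum_equiv Fin.revPerm _ _ fun i => ?_
    simp only [Fin.revPerm_apply, Fin.val_rev]
    omega

theorem vanderQ_eq (l : List ℕ) :
    vanderQ l = (Matrix.vandermonde fun i => (degVec l i : ℚ)).det := by
  rw [Matrix.det_vandermonde, vanderQ]
  refine Finset.prod_congr rfl fun i _ => ?_
  rw [← Finset.prod_filter]
  refine Finset.prod_congr ?_ fun _ _ => rfl
  ext j
  simp

theorem sum_two_mul_fin (q : ℕ) :
    ∑ i : Fin q, (2 * (i : ℕ) + 0) + q = q ^ 2 := by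
  rw [Fin.sum_univ_eq_sum_range (fun i => 2 * i + 0)]
  induction q with
  | zero => rfl
  | succ q ih => rw [Finset.sum_range_succ]; linarith

theorem sum_two_mul_add_fin (q : ℕ) :
    ∑ i : Fin q, (2 * (i : ℕ) + 1) = q ^ 2 := by
  rw [Fin.sum_univ_eq_sum_range (fun i => 2 * i + 1)]
  induction q with
  | zero => rfl
  | succ q ih => rw [Finset.sum_range_succ]; linarith

theorem sum_fin (q : ℕ) :
    2 * ∑ i : Fin q, (i : ℕ) + q = q ^ 2 := by
  rw [Fin.sum_univ_eq_sum_range (fun i => i)]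
  induction q with
  | zero => rfl
  | succ q ih => rw [Finset.sum_range_succ]; linarith

theorem exponent_eq (p q k : ℕ) (hk : k = if q ≤ p then p - q else q - p - 1) :
    ∑ i : Fin q, (2 * (i : ℕ) + 0) + ∑ i : Fin p, (2 * (i : ℕ) + 1) =
      ∑ i : Fin (q + p), (i : ℕ) + k * (k + 1) / 2 := by
  have h1 := sum_two_mul_fin q
  have h2 := sum_two_mul_add_fin p
  have h3 := sum_fin (q + p)
  have h4 : 2 * (k * (k + 1) / 2) = k * (k + 1) :=
    Nat.mul_div_cancel' (Nat.even_mul_succ_self k).two_dvd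
  generalize ∑ i : Fin q, (2 * (i : ℕ) + 0) = S1 at *
  generalize ∑ i : Fin p, (2 * (i : ℕ) + 1) = S2 at *
  generalize ∑ i : Fin (q + p), (i : ℕ) = S3 at *
  generalize k * (k + 1) / 2 = m at *
  split_ifs at hk with h
  · obtain ⟨c, rfl⟩ := Nat.exists_eq_add_of_le h
    have : k = c := by omega
    subst this
    nlinarith
  · obtain ⟨c, rfl⟩ := Nat.exists_eq_add_of_lt (not_le.mp h)
    have : k = c := by omega
    subst this
    nlinarith

open Polynomial in
theorem wr_low' {n : ℕ} (d : Fin n → ℕ) (hd : Function.Injective d) (p q : ℕ)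
    (hp : (Finset.univ.filter fun i => Odd (d i)).card = p)
    (hq : (Finset.univ.filter fun i => Even (d i)).card = q) :
    q + p = n ∧ ∃ R : ℚ[X], R.eval 0 ≠ 0 ∧
      X ^ (∑ i : Fin n, (i : ℕ)) * (Matrix.of fun i j : Fin n =>
        (⇑derivative)^[(i : ℕ)] (heQ (d j))).det
      = X ^ (∑ i : Fin q, (2 * (i : ℕ) + 0) + ∑ i : Fin p, (2 * (i : ℕ) + 1)) * expand ℚ 2 R := by
  have hE : Fintype.card {i // Even (d i)} = q := by rw [Fintype.card_subtype, hq]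
  have hO : Fintype.card {i // ¬ Even (d i)} = p := by
    rw [Fintype.card_subtype, ← hp]; simp
  let ε := Fintype.equivFinOfCardEq hE
  let ω := Fintype.equivFinOfCardEq hO
  let σ : Fin n ≃ Fin q ⊕ Fin p :=
    (Equiv.sumCompl (fun i => Even (d i))).symm.trans (Equiv.sumCongr ε ω)
  have ha : ∀ i, 2 * (d (ε.symm i) / 2) + 0 = d (ε.symm i) := by
    intro i
    have := Nat.even_iff.mp (ε.symm i).2
    omega
  have hb : ∀ i, 2 * (d (ω.symm i) / 2) + 1 = d (ω.symm i) := by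
    intro i
    have := Nat.odd_iff.mp (Nat.not_even_iff_odd.mp (ω.symm i).2)
    omega
  refine ⟨by simpa using (Fintype.card_congr σ).symm, ?_⟩
  obtain ⟨R, hR0, hR⟩ := wr_low σ (fun i => d (ε.symm i) / 2) (fun i => d (ω.symm i) / 2)
    (by
      intro i j h
      apply ε.symm.injective
      apply Subtype.ext
      apply hd
      rw [← ha i, ← ha j]
      simp only at h
      rw [h])
    (by
      intro i j h
      apply ω.symm.injective
      apply Subtype.ext
      apply hd
      rw [← hb i, ← hb j]
      simp only at h
      rw [h])
  refine ⟨R, hR0, ?_⟩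
  rw [← hR]
  have : ∀ j, Sum.elim (fun i => 2 * (d (ε.symm i) / 2) + 0) (fun i => 2 * (d (ω.symm i) / 2) + 1) (σ j)
      = d j := by
    intro j
    obtain ⟨s, rfl⟩ := σ.symm.surjective j
    rw [Equiv.apply_symm_apply]
    rcases s with s | s
    · rw [Sum.elim_inl, ha]; rfl
    · rw [Sum.elim_inr, hb]; rfl
  simp_rw [this]

/-- Factorization of the Wronskian Hermite polynomial:
`He_λ(X) = X^{k(k+1)/2} · R(X²)` with `R` monic, `R(0) ≠ 0`, and
`k(k+1)/2 + 2·deg R = |λ|`. -/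
theorem wronskianHermite_factorization (l : List ℕ) (hl : IsPartition l) :
    ∃ R : Polynomial ℚ, R.Monic ∧ R.eval 0 ≠ 0 ∧
      HeW l = Polynomial.X ^ (coreK l * (coreK l + 1) / 2) *
        R.comp (Polynomial.X ^ 2) ∧
      coreK l * (coreK l + 1) / 2 + 2 * R.natDegree = l.sum := by
  classical
  obtain ⟨hn, R, hR0, hR⟩ := wr_low' (degVec l) (degVec_injective l hl) (oddCount l) (evenCount l)
    rfl rfl
  obtain ⟨ht1, ht2⟩ := wr_top (degVec l)
  have hv : vanderQ l ≠ 0 := by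
    rw [vanderQ_eq, Matrix.det_vandermonde_ne_zero_iff]
    exact Nat.cast_injective.comp (degVec_injective l hl)
  rw [← vanderQ_eq] at ht2
  have hexp := exponent_eq (oddCount l) (evenCount l) (coreK l) rfl
  rw [hn] at hexp
  rw [hexp, pow_add, mul_assoc] at hR
  rw [sum_degVec] at ht1 ht2
  set m := coreK l * (coreK l + 1) / 2 with hm
  set c := ∑ i : Fin l.length, (i : ℕ) with hc
  set W := (Matrix.of fun i j : Fin l.length =>
      (⇑Polynomial.derivative)^[(i : ℕ)] (heQ (degVec l j))).det with hW
  have hHe : HeW l = Polynomial.C (vanderQ l)⁻¹ * W := rfl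
  have hWR : W = Polynomial.X ^ m * Polynomial.expand ℚ 2 R :=
    mul_left_cancel₀ (pow_ne_zero _ Polynomial.X_ne_zero) hR
  rw [Polynomial.coeff_X_pow_mul] at ht2
  have hW0 : W ≠ 0 := by
    intro h
    rw [h] at ht2
    exact hv (by simpa using ht2.symm)
  have hdeg : W.natDegree = l.sum := by
    apply le_antisymm
    · rw [Polynomial.natDegree_mul (pow_ne_zero _ Polynomial.X_ne_zero) hW0,
        Polynomial.natDegree_X_pow] at ht1
      omega
    · exact Polynomial.le_natDegree_of_ne_zero (by rw [ht2]; exact hv)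
  have hlead : W.leadingCoeff = vanderQ l := by
    rw [Polynomial.leadingCoeff, hdeg, ht2]
  have hRne : R ≠ 0 := by
    rintro rfl
    simp at hR0
  have hEne : Polynomial.expand ℚ 2 R ≠ 0 := (Polynomial.expand_ne_zero two_pos).mpr hRne
  have hRlead : R.leadingCoeff = vanderQ l := by
    rw [← hlead, hWR, Polynomial.leadingCoeff_mul, Polynomial.leadingCoeff_X_pow, one_mul,
      Polynomial.leadingCoeff_expand two_pos]
  have hi : (vanderQ l)⁻¹ ≠ 0 := inv_ne_zero hv
  refine ⟨Polynomial.C (vanderQ l)⁻¹ * R, ?_, ?_, ?_, ?_⟩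
  · rw [Polynomial.Monic, Polynomial.leadingCoeff_mul, Polynomial.leadingCoeff_C, hRlead,
      inv_mul_cancel₀ hv]
  · rw [Polynomial.eval_mul, Polynomial.eval_C]
    exact mul_ne_zero hi hR0
  · rw [hHe, hWR, ← Polynomial.expand_eq_comp_X_pow, map_mul, Polynomial.expand_C]
    ring
  · rw [Polynomial.natDegree_C_mul hi, ← hdeg, hWR,
      Polynomial.natDegree_mul (pow_ne_zero _ Polynomial.X_ne_zero) hEne,
      Polynomial.natDegree_X_pow, Polynomial.natDegree_expand, mul_comm 2]
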